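/- For q > 2 and any h ≥ 2, except for q = 3 and h = 2, there exists a GH code C_H of length n = q^h over 𝔽_q with ker(C_H) = k if and only if k ∈ {1, 2, …, h+1}. For q = 3 and h = 2, there exists a GH code C_H of length n = 9 over 𝔽_3 with ker(C_H) = k if and only if k ∈ {2, 3}. -/

import Mathlib

open Finset

/-- `H` is a generalized Hadamard matrix with parameter `lam`: for every pair of
distinct rows, the multiset of coordinatewise differences contains every element
of `F` exactly `lam` times. -/
def IsGH {F : Type*} [Fintype F] [DecidableEq F] [Sub F]
    {ι : Type*} [Fintype ι] (lam : ℕ) (H : Matrix ι ι F) : Prop :=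
  ∀ i j : ι, i ≠ j → ∀ a : F,
    (Finset.univ.filter (fun s => H i s - H j s = a)).card = lam

/-- A matrix is normalized if its first row and first column are all zeros. -/
def Normalized {F : Type*} [Zero F] {n : ℕ} (H : Matrix (Fin n) (Fin n) F) : Prop :=
  ∀ i s : Fin n, (i.val = 0 ∨ s.val = 0) → H i s = 0

/-- The code `F_H` whose codewords are the rows of `H`. -/
def rowSet {F ι : Type*} (H : Matrix ι ι F) : Set (ι → F) :=
  Set.range (fun i => H i)

/-- The GH code `C_H = ⋃_{α ∈ F} (F_H + α·𝟏)`. -/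
def ghCode {F ι : Type*} [Add F] (H : Matrix ι ι F) : Set (ι → F) :=
  {v | ∃ (α : F) (i : ι), v = fun s => H i s + α}

/-- The rank of a code: the dimension of its linear span. -/
noncomputable def rankC {F ι : Type*} [Field F] (C : Set (ι → F)) : ℕ :=
  Module.finrank F (Submodule.span F C)

/-- The kernel `K(C) = {x : αx + C = C for all α}` of a code. -/
def kerSet {F ι : Type*} [Mul F] [Add F] (C : Set (ι → F)) : Set (ι → F) :=
  {x | ∀ α : F, (fun c => (fun i => α * x i) + c) '' C = C}

/-- The dimension of the kernel of a code. -/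
noncomputable def kerDim {F ι : Type*} [Field F] (C : Set (ι → F)) : ℕ :=
  Module.finrank F (Submodule.span F (kerSet C))

/-- The `p`-kernel `K_p(C) = {x : x + C = C}` of a code. -/
def pKerSet {F ι : Type*} [Add F] (C : Set (ι → F)) : Set (ι → F) :=
  {x | (fun c => x + c) '' C = C}

/-- The Euclidean orthogonal code `C^⊥`. -/
def dualSet {F ι : Type*} [CommRing F] [Fintype ι] (C : Set (ι → F)) : Set (ι → F) :=
  {v | ∀ w ∈ C, ∑ i, v i * w i = 0}

/-- Two matrices are translation equivalent if the rows of one are obtained from the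
rows of the other by adding a fixed vector. -/
def TransEquiv {F ι : Type*} [Add F] (B B' : Matrix ι ι F) : Prop :=
  ∃ v : ι → F, rowSet B' = (fun b => v + b) '' rowSet B

/-- The Kronecker sum `H₁ ⊕ H₂`. -/
def kroneckerSum {F ι κ : Type*} [Add F] (H₁ : Matrix ι ι F) (H₂ : Matrix κ κ F) :
    Matrix (ι × κ) (ι × κ) F :=
  fun p r => H₁ p.1 r.1 + H₂ p.2 r.2

/-- The Kronecker sum `H₁ ⊕ [B₁, …, Bₙ]`, whose `(i,j)` block is `h_{ij} + B_i`. -/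
def kroneckerSumFam {F ι κ : Type*} [Add F] (H₁ : Matrix ι ι F) (B : ι → Matrix κ κ F) :
    Matrix (ι × κ) (ι × κ) F :=
  fun p r => H₁ p.1 r.1 + B p.1 p.2 r.2

/-- The multiplicative-table matrix `S_q` of a field. -/
def mulTable (F : Type*) [Mul F] : Matrix F F F := fun i j => i * j

/-- A code is `K`-additive, for a subfield `K`, if it is a linear space over `K`. -/
def IsAdditiveOver {F ι : Type*} [Field F] (K : Subfield F) (C : Set (ι → F)) : Prop :=
  (0 : ι → F) ∈ C ∧ (∀ x ∈ C, ∀ y ∈ C, x + y ∈ C) ∧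
    ∀ (a : K), ∀ x ∈ C, (fun i => (a : F) * x i) ∈ C

/-!
A normalized matrix puts `0` in its code, so the kernel lies in a code of size at most `q ^ (h + 1)`
and contains `1`, which gives the bounds.

Every value is attained by a variant of the Sylvester matrix, the one with rows
`(s, t) ↦ i ⬝ᵥ s + j ⬝ᵥ t`. Permuting the `t` by `π i` and adding `v i t` in the rows `(i, j)` keeps
it generalized Hadamard. If these are chosen so that every kernel word has `i = 0`, the kernel
consists of the functions of `t` that are affine in `π i t` for all `i`: with `π = 1` and one
quadratic `v i` for all `i ≠ 0` these are the affine forms in `t`, and with one well-chosen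
nontrivial `π i` only the constants are left.

For order 9 a nonconstant kernel word is needed. Counting pairs of equal entries shows that few
triples of rows have an unbalanced sum, and two pairs of rows with the same sum up to a constant
always exist; this forces three rows, two of them distinct, with constant sum, a *line*. The
difference of two rows of a line translates every row to another one up to a constant.
-/

section Kernel

variable {F ι κ : Type*}

theorem mem_kerSet_iff [Ring F] {C : Set (ι → F)} {x : ι → F} :
    x ∈ kerSet C ↔ ∀ α : F, ∀ c ∈ C, α • x + c ∈ C := by
  refine ⟨fun hx α c hc => hx α ▸ ⟨c, hc, rfl⟩, fun hx α => Set.Subset.antisymm ?_ ?_⟩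
  · rintro _ ⟨c, hc, rfl⟩
    exact hx α c hc
  · intro c hc
    refine ⟨(-α) • x + c, hx (-α) c hc, funext fun i => ?_⟩
    simp

/-- The kernel `K(C)` as a submodule of the ambient space, which makes `kerDim` a `finrank`. -/
def kerSubmodule [Ring F] (C : Set (ι → F)) : Submodule F (ι → F) where
  carrier := kerSet C
  zero_mem' := mem_kerSet_iff.2 fun α c hc => by rwa [smul_zero, zero_add]
  add_mem' hx hy := mem_kerSet_iff.2 fun α c hc => by
    rw [smul_add, add_assoc]
    exact mem_kerSet_iff.1 hx α _ (mem_kerSet_iff.1 hy α c hc)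
  smul_mem' β _ hx := mem_kerSet_iff.2 fun α c hc => by
    rw [smul_smul]
    exact mem_kerSet_iff.1 hx (α * β) c hc

theorem kerSet_subset_of_zero_mem [Ring F] {C : Set (ι → F)} (h0 : 0 ∈ C) : kerSet C ⊆ C :=
  fun x hx => by simpa using mem_kerSet_iff.1 hx 1 0 h0

/-- Over a prime field every scalar is a natural number, so the kernel is the `p`-kernel. -/
theorem mem_kerSet_of_forall_add_mem [Ring F] [Fintype F] (hF : (Fintype.card F).Prime)
    {C : Set (ι → F)} {x : ι → F} (hx : ∀ c ∈ C, x + c ∈ C) : x ∈ kerSet C := by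
  have hnat : ∀ n : ℕ, ∀ c ∈ C, (n : F) • x + c ∈ C := by
    intro n
    induction n with
    | zero => simp
    | succ n ih =>
      intro c hc
      rw [Nat.cast_succ, add_smul, one_smul, add_assoc]
      exact ih _ (hx c hc)
  refine mem_kerSet_iff.2 fun α => ?_
  obtain ⟨n, hn⟩ := ZMod.natCast_zmod_surjective ((ZMod.ringEquivOfPrime F hF rfl).symm α)
  rw [RingEquiv.eq_symm_apply, map_natCast] at hn
  exact hn ▸ hnat n

theorem kerSubmodule_image [Ring F] (L : (ι → F) ≃ₗ[F] (κ → F)) (C : Set (ι → F)) :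
    kerSubmodule (L '' C) = (kerSubmodule C).map (L : (ι → F) →ₗ[F] (κ → F)) := by
  refine SetLike.coe_injective (Set.ext fun x => ?_)
  obtain ⟨x, rfl⟩ := L.surjective x
  change L x ∈ kerSet (L '' C) ↔ L x ∈ L '' kerSet C
  rw [L.injective.mem_set_image, mem_kerSet_iff, mem_kerSet_iff]
  simp only [Set.forall_mem_image, ← map_smul, ← map_add, L.injective.mem_set_image]

theorem one_mem_kerSet_ghCode [Ring F] (H : Matrix ι ι F) : 1 ∈ kerSet (ghCode H) := by
  rw [mem_kerSet_iff]
  rintro α _ ⟨β, i, rfl⟩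
  refine ⟨α + β, i, funext fun s => ?_⟩
  simp only [Pi.add_apply, Pi.smul_apply, Pi.one_apply, smul_eq_mul, mul_one, add_left_comm]

theorem ghCode_submatrix [Add F] (e : κ ≃ ι) (H : Matrix ι ι F) :
    ghCode (H.submatrix e e) = (fun x => x ∘ e) '' ghCode H := by
  ext v
  constructor
  · rintro ⟨α, i, rfl⟩
    exact ⟨_, ⟨α, e i, rfl⟩, rfl⟩
  · rintro ⟨_, ⟨α, i, rfl⟩, rfl⟩
    refine ⟨α, e.symm i, funext fun s => ?_⟩
    simp

theorem ncard_ghCode_le [Add F] [Fintype F] [Fintype ι] (H : Matrix ι ι F) :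
    (ghCode H).ncard ≤ Fintype.card F * Fintype.card ι := by
  have h : ghCode H = (fun (p : F × ι) s => H p.2 s + p.1) '' Set.univ := by
    ext v
    simp [ghCode, eq_comm]
  rw [h, ← Fintype.card_prod, ← Nat.card_eq_fintype_card, ← Set.ncard_univ]
  exact Set.ncard_image_le

variable [Field F]

theorem kerDim_eq_finrank (C : Set (ι → F)) : kerDim C = Module.finrank F (kerSubmodule C) :=
  congrArg (fun K : Submodule F (ι → F) => Module.finrank F K) (Submodule.span_eq (kerSubmodule C))

theorem kerDim_image (L : (ι → F) ≃ₗ[F] (κ → F)) (C : Set (ι → F)) :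
    kerDim (L '' C) = kerDim C := by
  rw [kerDim_eq_finrank, kerSubmodule_image, LinearEquiv.finrank_map_eq, kerDim_eq_finrank]

theorem kerDim_ghCode_submatrix (e : κ ≃ ι) (H : Matrix ι ι F) :
    kerDim (ghCode (H.submatrix e e)) = kerDim (ghCode H) := by
  rw [ghCode_submatrix]
  exact kerDim_image (LinearEquiv.funCongrLeft F F e) (ghCode H)

theorem one_le_kerDim_ghCode [Finite ι] [Nonempty ι] (H : Matrix ι ι F) :
    1 ≤ kerDim (ghCode H) := by
  rw [kerDim_eq_finrank, Submodule.one_le_finrank_iff]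
  exact Submodule.ne_bot_iff _ |>.2 ⟨1, one_mem_kerSet_ghCode H, one_ne_zero⟩

theorem two_le_kerDim_ghCode [Finite ι] {H : Matrix ι ι F} {f : ι → F}
    (hf : f ∈ kerSet (ghCode H)) {x y : ι} (hxy : f x ≠ f y) : 2 ≤ kerDim (ghCode H) := by
  have : Nonempty ι := ⟨x⟩
  let K := kerSubmodule (ghCode H)
  have hli : LinearIndependent F ![(⟨1, one_mem_kerSet_ghCode H⟩ : K), ⟨f, hf⟩] := by
    rw [LinearIndependent.pair_iff' fun h => one_ne_zero (congrArg Subtype.val h)]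
    intro a ha
    have haf : ∀ s, a = f s := fun s => by simpa using congrFun (congrArg Subtype.val ha) s
    exact hxy ((haf x).symm.trans (haf y))
  simpa [kerDim_eq_finrank, K] using hli.fintype_card_le_finrank

theorem kerDim_ghCode_le [Fintype F] [Fintype ι] {H : Matrix ι ι F} {h : ℕ}
    (h0 : 0 ∈ ghCode H) (hι : Fintype.card ι = Fintype.card F ^ h) :
    kerDim (ghCode H) ≤ h + 1 := by
  have hker : (kerSet (ghCode H)).ncard = Fintype.card F ^ kerDim (ghCode H) := by
    rw [kerDim_eq_finrank, ← Nat.card_coe_set_eq, ← Nat.card_eq_fintype_card (α := F)]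
    exact Module.natCard_eq_pow_finrank (V := kerSubmodule (ghCode H))
  have hle := (Set.ncard_le_ncard (kerSet_subset_of_zero_mem h0)).trans (ncard_ghCode_le H)
  rw [hker, hι, ← pow_succ'] at hle
  exact (Nat.pow_le_pow_iff_right Fintype.one_lt_card).1 hle

theorem Normalized.kerDim_ghCode_mem_Icc [Fintype F] {h : ℕ}
    {H : Matrix (Fin (Fintype.card F ^ h)) (Fin (Fintype.card F ^ h)) F} (hH : Normalized H) :
    kerDim (ghCode H) ∈ Set.Icc 1 (h + 1) := by
  have : NeZero (Fintype.card F ^ h) := ⟨(pow_pos Fintype.card_pos h).ne'⟩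
  refine ⟨one_le_kerDim_ghCode H, kerDim_ghCode_le ⟨0, 0, funext fun s => ?_⟩ (Fintype.card_fin _)⟩
  rw [hH 0 s (Or.inl rfl), add_zero, Pi.zero_apply]

end Kernel

section Balanced

variable {F ι κ : Type*} [DecidableEq F] [Fintype ι] [Fintype κ] {lam : ℕ} {u : ι → F}

/-- A word is balanced if it takes every value exactly `lam` times; a matrix is generalized
Hadamard when the differences of its distinct rows are balanced. -/
def IsBalanced (lam : ℕ) (u : ι → F) : Prop :=
  ∀ a, #{x | u x = a} = lam

theorem IsGH.isBalanced_sub [Fintype F] [Sub F] {H : Matrix ι ι F} (hH : IsGH lam H) {i j : ι}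
    (hij : i ≠ j) : IsBalanced lam fun x => H i x - H j x :=
  hH i j hij

theorem IsBalanced.comp_equiv (hu : IsBalanced lam u) (e : κ ≃ ι) :
    IsBalanced lam fun x => u (e x) := fun a => by
  rw [← hu a]
  refine Finset.card_equiv e fun x => ?_
  rw [Finset.mem_filter_univ, Finset.mem_filter_univ]

theorem IsBalanced.of_affine [Field F] (hu : IsBalanced lam u) {v : ι → F} {ε c : F}
    (hε : ε ≠ 0) (hv : ∀ x, v x = ε * u x + c) : IsBalanced lam v := fun a => by
  rw [← hu ((a - c) / ε)]
  congr 1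
  ext x
  rw [Finset.mem_filter_univ, Finset.mem_filter_univ, hv, eq_div_iff hε, eq_sub_iff_add_eq,
    mul_comm]

theorem IsBalanced.exists_eq (hu : IsBalanced lam u) (hlam : lam ≠ 0) (a : F) : ∃ x, u x = a := by
  rw [← hu a, Finset.card_ne_zero] at hlam
  simpa [Finset.Nonempty] using hlam

theorem IsBalanced.of_fst {u : κ × ι → F} (hu : ∀ t, IsBalanced lam fun s => u (s, t)) :
    IsBalanced (Fintype.card ι * lam) u := fun a => by
  rw [Finset.card_filter, Fintype.sum_prod_type_right, ← smul_eq_mul, ← Finset.card_univ,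
    ← Finset.sum_const]
  exact Finset.sum_congr rfl fun t _ => (Finset.card_filter _ _).symm.trans (hu t a)

theorem IsBalanced.of_snd {u : ι × κ → F} (hu : ∀ s, IsBalanced lam fun t => u (s, t)) :
    IsBalanced (Fintype.card ι * lam) u :=
  (IsBalanced.of_fst (u := fun p : κ × ι => u (p.2, p.1)) hu).comp_equiv (Equiv.prodComm ι κ)

variable [Fintype F]

theorem IsBalanced.card_eq (hu : IsBalanced lam u) : Fintype.card ι = Fintype.card F * lam := by
  rw [← Finset.card_univ, ← Finset.card_univ, ← smul_eq_mul, ← Finset.sum_const,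
    Finset.card_eq_sum_card_fiberwise fun x _ => Finset.mem_univ (u x)]
  exact Finset.sum_congr rfl fun a _ => hu a

theorem isBalanced_of_surjective {G : Type*} [AddGroup G] [Fintype G] [AddGroup F] {f : G →+ F}
    (hf : Function.Surjective f) (hG : Fintype.card G = Fintype.card F * lam) :
    IsBalanced lam f := by
  have hfib : IsBalanced #{x | f x = 0} f := fun a =>
    AddMonoidHom.card_fiber_eq_of_mem_range f (hf a) (hf 0)
  rw [hfib.card_eq] at hG
  exact Nat.eq_of_mul_eq_mul_left Fintype.card_pos hG ▸ hfib

/-- The number of ordered pairs of positions at which a word takes equal values: the second moment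
of its value distribution, minimal exactly for balanced words. -/
def collisions (u : ι → F) : ℕ :=
  #{p : ι × ι | u p.1 = u p.2}

theorem collisions_eq_sum_sq (u : ι → F) : collisions u = ∑ a, #{x | u x = a} ^ 2 := by
  rw [collisions, Finset.card_eq_sum_card_fiberwise fun p _ => Finset.mem_univ (u p.1)]
  refine Finset.sum_congr rfl fun a _ => ?_
  rw [sq, ← Finset.card_product]
  congr 1
  ext ⟨x, y⟩
  simp only [Finset.mem_filter, Finset.mem_univ, true_and, Finset.mem_product]
  exact ⟨fun ⟨hxy, hx⟩ => ⟨hx, hxy ▸ hx⟩, fun ⟨hx, hy⟩ => ⟨hx.trans hy.symm, hx⟩⟩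

theorem collisions_eq_add_sum_sq (hι : Fintype.card ι = Fintype.card F * lam) (u : ι → F) :
    (collisions u : ℤ) =
      Fintype.card F * lam ^ 2 + ∑ a, ((#{x | u x = a} : ℤ) - lam) ^ 2 := by
  have hsum : ∑ a, (#{x | u x = a} : ℤ) = Fintype.card F * lam := by
    rw [← Finset.card_univ,
      Finset.card_eq_sum_card_fiberwise fun x _ => Finset.mem_univ (u x)] at hι
    exact_mod_cast hι
  simp only [sub_sq, Finset.sum_add_distrib, Finset.sum_sub_distrib, ← Finset.sum_mul,
    ← Finset.mul_sum, hsum, collisions_eq_sum_sq, Finset.sum_const, Finset.card_univ, nsmul_eq_mul]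
  push_cast
  ring

theorem le_collisions (hι : Fintype.card ι = Fintype.card F * lam) (u : ι → F) :
    Fintype.card F * lam ^ 2 ≤ collisions u := by
  zify
  rw [collisions_eq_add_sum_sq hι]
  exact le_add_of_nonneg_right (Finset.sum_nonneg fun a _ => sq_nonneg _)

theorem collisions_eq_iff (hι : Fintype.card ι = Fintype.card F * lam) :
    collisions u = Fintype.card F * lam ^ 2 ↔ IsBalanced lam u := by
  zify
  rw [collisions_eq_add_sum_sq hι, add_eq_left,
    Finset.sum_eq_zero_iff_of_nonneg fun a _ => sq_nonneg _]
  simp only [Finset.mem_univ, true_imp_iff, sq_eq_zero_iff, sub_eq_zero, Nat.cast_inj, IsBalanced]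

end Balanced

section DoubleCounting

variable {F ι : Type*} [DecidableEq F] [AddCommGroup F] [Fintype ι]

theorem sum_collisions_transpose (H : Matrix ι ι F) :
    ∑ p : ι × ι, collisions (fun i => H i p.1 - H i p.2) =
      ∑ p : ι × ι, collisions (fun x => H p.1 x - H p.2 x) := by
  have h := Finset.sum_card_bipartiteAbove_eq_sum_card_bipartiteBelow (s := univ) (t := univ)
    fun p q : ι × ι => H q.1 p.1 - H q.1 p.2 = H q.2 p.1 - H q.2 p.2
  simpa only [collisions, Finset.bipartiteAbove, Finset.bipartiteBelow,
    sub_eq_sub_iff_sub_eq_sub (a := H _ (Prod.fst _))] using h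

variable [Fintype F] {lam : ℕ} {H : Matrix ι ι F}

theorem IsGH.collisions_sub [DecidableEq ι] (hH : IsGH lam H) (p : ι × ι) :
    collisions (fun x => H p.1 x - H p.2 x) =
      if p.1 = p.2 then Fintype.card ι ^ 2 else Fintype.card F * lam ^ 2 := by
  split_ifs with hp
  · simp [collisions, hp, sq]
  · exact (collisions_eq_iff (hH.isBalanced_sub hp).card_eq).2 (hH.isBalanced_sub hp)

/-- The pairs of columns have the same total number of collisions as the pairs of rows, hence the
smallest possible one, so each pair of distinct columns attains the minimum. -/
theorem IsGH.transpose (hH : IsGH lam H) : IsGH lam H.transpose := by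
  classical
  intro x y hxy
  have hι := (hH.isBalanced_sub hxy).card_eq
  let c : ι × ι → ℕ := fun p =>
    if p.1 = p.2 then Fintype.card ι ^ 2 else Fintype.card F * lam ^ 2
  have hle : ∀ p ∈ univ, c p ≤ collisions fun i => H i p.1 - H i p.2 := by
    rintro p -
    by_cases hp : p.1 = p.2
    · simp [c, collisions, hp, sq]
    · simpa only [c, if_neg hp] using le_collisions hι _
  have hsum : ∑ p, c p = ∑ p : ι × ι, collisions fun i => H i p.1 - H i p.2 := by
    rw [sum_collisions_transpose]
    exact Finset.sum_congr rfl fun p _ => (hH.collisions_sub p).symm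
  have hxy' := (Finset.sum_eq_sum_iff_of_le hle).1 hsum (x, y) (Finset.mem_univ _)
  simp only [c, if_neg hxy] at hxy'
  exact (collisions_eq_iff hι).1 hxy'.symm

theorem IsGH.sum_collisions_sub (hH : IsGH lam H) (u : ι → F) :
    ∑ m, collisions (fun x => u x - H m x) =
      Fintype.card ι * (Fintype.card ι + (Fintype.card ι - 1) * lam) := by
  classical
  have hcol : ∀ p : ι × ι, #{m | u p.1 - H m p.1 = u p.2 - H m p.2} =
      if p.1 = p.2 then Fintype.card ι else lam := by
    intro p
    split_ifs with hp
    · simp [hp]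
    · rw [← hH.transpose p.1 p.2 hp (u p.1 - u p.2)]
      simp only [sub_eq_sub_iff_sub_eq_sub, Matrix.transpose_apply, eq_comm]
  have hswap := Finset.sum_card_bipartiteAbove_eq_sum_card_bipartiteBelow (s := univ) (t := univ)
    fun (m : ι) (p : ι × ι) => u p.1 - H m p.1 = u p.2 - H m p.2
  simp only [Finset.bipartiteAbove, Finset.bipartiteBelow, hcol] at hswap
  refine hswap.trans ?_
  have hrow : ∀ x : ι, (∑ y, if x = y then Fintype.card ι else lam) =
      Fintype.card ι + (Fintype.card ι - 1) * lam := by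
    intro x
    rw [← Finset.add_sum_erase _ _ (Finset.mem_univ x), if_pos rfl,
      Finset.sum_congr rfl fun y hy => if_neg (Finset.ne_of_mem_erase hy).symm, Finset.sum_const,
      Finset.card_erase_of_mem (Finset.mem_univ x), Finset.card_univ, smul_eq_mul]
  simp only [Fintype.sum_prod_type, hrow, Finset.sum_const, Finset.card_univ, smul_eq_mul]

end DoubleCounting

section Ternary

variable {ι : Type*} [Fintype ι] {u w f g c : ι → ZMod 3}

theorem zmod_three_eq_zero : (3 : ZMod 3) = 0 := rfl

theorem sum_univ_zmod_three {M : Type*} [AddCommMonoid M] (f : ZMod 3 → M) :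
    ∑ a, f a = f 0 + f 1 + f 2 :=
  Fin.sum_univ_three f

theorem forall_zmod_three {p : ZMod 3 → Prop} : (∀ a, p a) ↔ p 0 ∧ p 1 ∧ p 2 := by
  refine ⟨fun h => ⟨h 0, h 1, h 2⟩, fun ⟨h0, h1, h2⟩ a => ?_⟩
  fin_cases a
  exacts [h0, h1, h2]

/-- The four lines through `(a, b)` cover the affine plane over `ZMod 3`, and meet only there. -/
theorem card_four_lines (u w : ι → ZMod 3) (a b : ZMod 3) :
    #{x | u x = a} + #{x | w x = b} + #{x | w x - u x = b - a} + #{x | w x + u x = b + a} =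
      Fintype.card ι + 3 * #{x | u x = a ∧ w x = b} := by
  have hpt : ∀ s t a b : ZMod 3,
      (if s = a then 1 else 0) + (if t = b then 1 else 0) + (if t - s = b - a then 1 else 0) +
        (if t + s = b + a then 1 else 0) = 1 + 3 * if s = a ∧ t = b then 1 else 0 := by
    decide
  simp only [Finset.card_filter, Fintype.card_eq_sum_ones, Finset.mul_sum,
    ← Finset.sum_add_distrib, hpt]

theorem card_add_eq_three_mul {lam : ℕ} (hu : IsBalanced lam u) (hw : IsBalanced lam w)
    (hwu : IsBalanced lam fun x => w x - u x) (a b : ZMod 3) :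
    #{x | w x + u x = b + a} = 3 * #{x | u x = a ∧ w x = b} := by
  have h := card_four_lines u w a b
  rw [hu a, hw b, hwu (b - a), hu.card_eq, ZMod.card] at h
  omega

theorem IsBalanced.bijective_prodMk (hu : IsBalanced 3 u) (hw : IsBalanced 3 w)
    (hsub : IsBalanced 3 fun x => w x - u x) (hadd : IsBalanced 3 fun x => w x + u x) :
    Function.Bijective fun x => (u x, w x) := by
  rw [Function.bijective_iff_existsUnique]
  rintro ⟨a, b⟩
  simp only [Prod.mk.injEq]
  rw [Fintype.existsUnique_iff_card_one]
  have h := card_add_eq_three_mul hu hw hsub a b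
  rw [hadd (b + a)] at h
  omega

theorem le_collisions_of_three_dvd (hι : Fintype.card ι = 9) (hdvd : ∀ a, 3 ∣ #{x | u x = a})
    (hu : ¬ IsBalanced 3 u) : 45 ≤ collisions u := by
  choose d hd using hdvd
  have hsum : ∑ a, d a = 3 := by
    rw [← Finset.card_univ,
      Finset.card_eq_sum_card_fiberwise fun x _ => Finset.mem_univ (u x)] at hι
    simp only [hd, ← Finset.mul_sum] at hι
    omega
  have hne : ¬ ∀ a, d a = 1 := fun h => hu fun a => by rw [hd, h]
  have hsq : 5 ≤ ∑ a, d a ^ 2 := by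
    rw [sum_univ_zmod_three] at hsum ⊢
    rw [forall_zmod_three] at hne
    generalize d 0 = x, d 1 = y, d 2 = z at *
    have hx : x ≤ 3 := by omega
    have hy : y ≤ 3 := by omega
    obtain rfl : z = 3 - x - y := by omega
    interval_cases x <;> interval_cases y <;> simp_all
  rw [collisions_eq_sum_sq]
  simp only [hd, mul_pow, ← Finset.mul_sum]
  omega

/-- A permutation of `ZMod 3` with exactly one fixed point is a reflection, any other one is a
translation. -/
theorem card_fixed_eq_one_or_three_dvd : ∀ φ : ZMod 3 → ZMod 3, Function.Injective φ →
    (#{t | t = φ t} = 1 ∧ ∃ d, ∀ t, t + φ t = d) ∨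
      (3 ∣ #{t | t = φ t} ∧ ∃ d, ∀ t, t - φ t = d) := by
  decide

theorem exists_eq_add_or_eq_neg_add_of_surjective : ∀ ψ : ZMod 3 → ZMod 3, Function.Surjective ψ →
    (∃ d, ∀ t, ψ t = t + d) ∨ (∃ d, ∀ t, ψ t = -t + d) := by
  decide

theorem exists_sub_or_add_eq_of_sum_card_fixed {φ : ZMod 3 → ZMod 3 → ZMod 3}
    (hφ : ∀ a, Function.Injective (φ a)) (hfix : ∑ a, #{t | t = φ a t} = 3) :
    ∃ ψ : ZMod 3 → ZMod 3, (∀ a t, t - φ a t = ψ a) ∨ (∀ a t, t + φ a t = ψ a) := by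
  have hall := fun a => card_fixed_eq_one_or_three_dvd (φ a) (hφ a)
  have hcases : (∀ a, #{t | t = φ a t} = 1) ∨ ∀ a, 3 ∣ #{t | t = φ a t} := by
    have h0 := hall 0
    have h1 := hall 1
    have h2 := hall 2
    rw [sum_univ_zmod_three] at hfix
    rw [forall_zmod_three, forall_zmod_three]
    omega
  rcases hcases with hone | hdvd
  · have hrefl : ∀ a, ∃ d, ∀ t, t + φ a t = d := fun a =>
      (hall a).elim And.right fun h => by have := hone a; omega
    choose ψ hψ using hrefl
    exact ⟨ψ, Or.inr hψ⟩
  · have htrans : ∀ a, ∃ d, ∀ t, t - φ a t = d := fun a =>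
      (hall a).elim (fun h => by have := hdvd a; omega) And.right
    choose ψ hψ using htrans
    exact ⟨ψ, Or.inl hψ⟩

theorem exists_sub_or_add_eq_comp (hfg : Function.Bijective fun x => (f x, g x))
    (hfc : Function.Bijective fun x => (f x, c x)) (hgc : IsBalanced 3 fun x => g x - c x) :
    ∃ ψ : ZMod 3 → ZMod 3, (∀ x, g x - c x = ψ (f x)) ∨ (∀ x, g x + c x = ψ (f x)) := by
  let e := Equiv.ofBijective _ hfg
  let φ : ZMod 3 → ZMod 3 → ZMod 3 := fun a t => c (e.symm (a, t))
  have hφ : ∀ x, φ (f x) (g x) = c x := fun x => congrArg c (e.symm_apply_apply x)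
  have hφ_inj : ∀ a, Function.Injective (φ a) := by
    intro a s t hst
    have hf : ∀ t, f (e.symm (a, t)) = a := fun t => congrArg Prod.fst (e.apply_symm_apply (a, t))
    have heq := hfc.injective (Prod.ext ((hf s).trans (hf t).symm) hst)
    exact congrArg Prod.snd (e.symm.injective heq)
  have hfix : ∑ a, #{t | t = φ a t} = 3 := by
    refine Eq.trans ?_ (hgc 0)
    rw [Finset.card_equiv e (t := {p | p.2 = φ p.1 p.2}) fun x => ?_]
    · simp only [Finset.card_filter, Fintype.sum_prod_type]
    · rw [Finset.mem_filter_univ, Finset.mem_filter_univ, sub_eq_zero, Equiv.ofBijective_apply, hφ]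
  obtain ⟨ψ, hψ⟩ := exists_sub_or_add_eq_of_sum_card_fixed hφ_inj hfix
  exact ⟨ψ, hψ.imp (fun h x => by rw [← h (f x) (g x), hφ]) fun h x => by rw [← h (f x) (g x), hφ]⟩

theorem isBalanced_comp_sub (hfg : Function.Bijective fun x => (f x, g x))
    (θ : ZMod 3 → ZMod 3) : IsBalanced 3 fun x => θ (f x) - g x := by
  have h : IsBalanced 3 fun p : ZMod 3 × ZMod 3 => θ p.1 - p.2 :=
    IsBalanced.of_snd (lam := 1) fun s a => by
      rw [← Fintype.existsUnique_iff_card_one]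
      exact ⟨θ s - a, by simp, fun t ht => by simp [← ht]⟩
  exact h.comp_equiv (Equiv.ofBijective _ hfg)

theorem exists_eq_add_or_eq_neg_add_of_isBalanced_comp {ψ : ZMod 3 → ZMod 3}
    (hψ : IsBalanced 3 fun x => ψ (f x)) :
    ∃ d, (∀ x, ψ (f x) = f x + d) ∨ (∀ x, ψ (f x) = -f x + d) := by
  have hsurj : Function.Surjective ψ := fun a =>
    let ⟨x, hx⟩ := hψ.exists_eq three_ne_zero a
    ⟨f x, hx⟩
  obtain ⟨d, hd⟩ | ⟨d, hd⟩ := exists_eq_add_or_eq_neg_add_of_surjective ψ hsurj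
  exacts [⟨d, Or.inl fun x => hd (f x)⟩, ⟨d, Or.inr fun x => hd (f x)⟩]

theorem exists_add_eq_or_isBalanced_add_sub (hf : IsBalanced 3 f)
    (hfg : Function.Bijective fun x => (f x, g x)) (hfc : Function.Bijective fun x => (f x, c x))
    (hgc : IsBalanced 3 fun x => g x - c x) :
    (∃ d, ∀ x, g x + f x = c x + d) ∨ IsBalanced 3 fun x => g x + f x - c x := by
  obtain ⟨ψ, hψ | hψ⟩ := exists_sub_or_add_eq_comp hfg hfc hgc
  · simp only [hψ] at hgc
    obtain ⟨d, hd | hd⟩ := exists_eq_add_or_eq_neg_add_of_isBalanced_comp hgc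
    · refine Or.inr (hf.of_affine (ε := -1) (c := d) (by decide) fun x => ?_)
      linear_combination hψ x + hd x + f x * zmod_three_eq_zero
    · exact Or.inl ⟨d, fun x => by linear_combination hψ x + hd x⟩
  · refine Or.inr ((isBalanced_comp_sub hfg fun t => t - ψ t).of_affine one_ne_zero (c := 0)
      fun x => ?_)
    linear_combination -hψ x + g x * zmod_three_eq_zero

end Ternary

section OrderNine

variable {ι : Type*} [Fintype ι] {H : Matrix ι ι (ZMod 3)}

theorem IsGH.not_forall_sub_eq (hH : IsGH 3 H) {i j : ι} (hij : i ≠ j) (c : ZMod 3) :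
    ¬ ∀ x, H i x - H j x = c := fun h => by
  obtain ⟨x, hx⟩ := (hH.isBalanced_sub hij).exists_eq three_ne_zero (c + 1)
  simp [h x] at hx

theorem IsGH.three_dvd_card_add (hH : IsGH 3 H) {i j m : ι} (hij : i ≠ j) (hmi : m ≠ i)
    (hmj : m ≠ j) (a : ZMod 3) : 3 ∣ #{x | H i x + H j x + H m x = a} := by
  have hsub : IsBalanced 3 fun x => (H j x - H m x) - (H i x - H m x) :=
    (hH.isBalanced_sub hij.symm).of_affine one_ne_zero (c := 0) fun x => by ring
  have h := card_add_eq_three_mul (hH.isBalanced_sub hmi.symm) (hH.isBalanced_sub hmj.symm) hsub 0 a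
  refine ⟨_, (congrArg Finset.card (Finset.filter_congr fun x _ => ?_)).trans h⟩
  rw [add_zero, show H j x - H m x + (H i x - H m x) = H i x + H j x + H m x by
    linear_combination -H m x * zmod_three_eq_zero]

theorem IsGH.bijective_prodMk (hH : IsGH 3 H) {i j m : ι} (hij : i ≠ j) (hmi : m ≠ i)
    (hmj : m ≠ j) (h : IsBalanced 3 fun x => H i x + H j x + H m x) :
    Function.Bijective fun x => (H j x - H i x, H m x - H i x) := by
  refine (hH.isBalanced_sub hij.symm).bijective_prodMk (hH.isBalanced_sub hmi)
    ((hH.isBalanced_sub hmj).of_affine one_ne_zero (c := 0) fun x => ?_)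
    (h.of_affine one_ne_zero (c := 0) fun x => ?_)
  · ring
  · linear_combination -H i x * zmod_three_eq_zero

theorem IsGH.card_not_isBalanced_le (hH : IsGH 3 H) (hι : Fintype.card ι = 9) {i j : ι}
    (hij : i ≠ j) {s : Finset ι} (hs : ∀ m ∈ s, ¬ IsBalanced 3 fun x => H i x + H j x + H m x) :
    #s ≤ 3 := by
  classical
  have hι' : Fintype.card ι = Fintype.card (ZMod 3) * 3 := hι
  have hneg : ∀ m, collisions (fun x => (-H i x - H j x) - H m x) =
      collisions fun x => H i x + H j x + H m x := by
    intro m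
    simp only [collisions, ← neg_add', neg_inj]
  have hle : ∀ m ∈ univ, 27 + (if m ∈ s then 18 else 0) ≤
      collisions fun x => (-H i x - H j x) - H m x := by
    rintro m -
    rw [hneg]
    split_ifs with hm
    · have hmi : m ≠ i := by
        rintro rfl
        refine hs m hm ((hH.isBalanced_sub hij.symm).of_affine one_ne_zero (c := 0) fun x => ?_)
        linear_combination H m x * zmod_three_eq_zero
      have hmj : m ≠ j := by
        rintro rfl
        refine hs m hm ((hH.isBalanced_sub hij).of_affine one_ne_zero (c := 0) fun x => ?_)
        linear_combination H m x * zmod_three_eq_zero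
      exact le_collisions_of_three_dvd hι (hH.three_dvd_card_add hij hmi hmj) (hs m hm)
    · exact le_collisions hι' _
  have h := (Finset.sum_le_sum hle).trans_eq (hH.sum_collisions_sub _)
  rw [Finset.sum_add_distrib, Finset.sum_ite_mem, Finset.univ_inter] at h
  simp only [Finset.sum_const, Finset.card_univ, hι, smul_eq_mul] at h
  omega

/-- Otherwise the sums of any two of the words `H m - H i` with `m ∈ s` are functions of
`H j - H i`, and since `2` is invertible, three of these sums make each word such a function. -/
theorem IsGH.exists_sub_eq_sub_add (hH : IsGH 3 H) {i j : ι} (hij : i ≠ j) {s : Finset ι}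
    (hcard : 2 < #s) (hs : ∀ m ∈ s, m ≠ i ∧ m ≠ j ∧ IsBalanced 3 fun x => H i x + H j x + H m x) :
    ∃ a ∈ s, ∃ b ∈ s, a ≠ b ∧ ∃ c, ∀ x, H a x - H b x = H j x - H i x + c := by
  by_contra! hcon
  have hbij : ∀ m ∈ s, Function.Bijective fun x => (H j x - H i x, H m x - H i x) := fun m hm =>
    let ⟨hmi, hmj, h⟩ := hs m hm
    hH.bijective_prodMk hij hmi hmj h
  have hadd : ∀ a ∈ s, ∀ b ∈ s, a ≠ b → ∃ ψ : ZMod 3 → ZMod 3,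
      ∀ x, (H a x - H i x) + (H b x - H i x) = ψ (H j x - H i x) := by
    intro a ha b hb hab
    have hsub : IsBalanced 3 fun x => (H a x - H i x) - (H b x - H i x) :=
      (hH.isBalanced_sub hab).of_affine one_ne_zero (c := 0) fun x => by ring
    obtain ⟨ψ, hψ | hψ⟩ := exists_sub_or_add_eq_comp (hbij a ha) (hbij b hb) hsub
    · simp only [hψ] at hsub
      obtain ⟨d, hd | hd⟩ := exists_eq_add_or_eq_neg_add_of_isBalanced_comp hsub
      · obtain ⟨x, hx⟩ := hcon a ha b hb hab d
        exact absurd (by linear_combination hψ x + hd x) hx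
      · obtain ⟨x, hx⟩ := hcon b hb a ha hab.symm (-d)
        exact absurd (by linear_combination -hψ x - hd x) hx
    · exact ⟨ψ, hψ⟩
  obtain ⟨a, ha, b, hb, c, hc, hab, hac, hbc⟩ := Finset.two_lt_card.1 hcard
  obtain ⟨ψab, hψab⟩ := hadd a ha b hb hab
  obtain ⟨ψac, hψac⟩ := hadd a ha c hc hac
  obtain ⟨ψbc, hψbc⟩ := hadd b hb c hc hbc
  have ha_comp : ∀ x, H a x - H i x =
      ψbc (H j x - H i x) - ψab (H j x - H i x) - ψac (H j x - H i x) := fun x => by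
    linear_combination hψbc x - hψab x - hψac x + (H a x - H i x) * zmod_three_eq_zero
  obtain ⟨x, hx⟩ := (hbij a ha).surjective (0, 0)
  obtain ⟨y, hy⟩ := (hbij a ha).surjective (0, 1)
  simp only [Prod.mk.injEq, ha_comp] at hx hy
  rw [hx.1] at hx
  rw [hy.1] at hy
  exact zero_ne_one (hx.2.symm.trans hy.2)

theorem IsGH.exists_line_of_parallelogram_of_isBalanced (hH : IsGH 3 H) {p q s t m : ι}
    {c : ZMod 3} (hps : p ≠ s) (hqt : q ≠ t) (hpq : p ≠ q) (hpt : p ≠ t) (hsq : s ≠ q)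
    (hst : s ≠ t) (hpar : ∀ x, H p x + H s x = H q x + H t x + c) (hm : m ∉ ({p, q, s, t} : Set ι))
    (hbal : IsBalanced 3 fun x => H p x + H s x + H m x) :
    ∃ i j k, i ≠ j ∧ ∃ d, ∀ x, H i x + H j x + H k x = d := by
  classical
  simp only [Set.mem_insert_iff, Set.mem_singleton_iff, not_or] at hm
  obtain ⟨hmp, hmq, hms, hmt⟩ := hm
  have hs : ∀ r ∈ ({m, q, t} : Finset ι),
      r ≠ p ∧ r ≠ s ∧ IsBalanced 3 fun x => H p x + H s x + H r x := by
    simp only [Finset.forall_mem_insert, Finset.mem_singleton, forall_eq]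
    refine ⟨⟨hmp, hms, hbal⟩, ⟨hpq.symm, hsq.symm, ?_⟩, ⟨hpt.symm, hst.symm, ?_⟩⟩
    · exact (hH.isBalanced_sub hqt.symm).of_affine one_ne_zero (c := c) fun x => by
        linear_combination hpar x + H q x * zmod_three_eq_zero
    · exact (hH.isBalanced_sub hqt).of_affine one_ne_zero (c := c) fun x => by
        linear_combination hpar x + H t x * zmod_three_eq_zero
  obtain ⟨a, ha, b, hb, hab, d, hd⟩ := hH.exists_sub_eq_sub_add hps
    (Finset.two_lt_card.2 ⟨m, by simp, q, by simp, t, by simp, hmq, hmt, hqt⟩) hs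
  simp only [Finset.mem_insert, Finset.mem_singleton] at ha hb
  rcases ha with rfl | rfl | rfl <;> rcases hb with rfl | rfl | rfl <;> try exact absurd rfl hab
  · exact ⟨a, s, t, hms, d - c, fun x => by
      linear_combination hd x - hpar x + H s x * zmod_three_eq_zero⟩
  · exact ⟨a, s, q, hms, d - c, fun x => by
      linear_combination hd x - hpar x + H s x * zmod_three_eq_zero⟩
  · exact ⟨b, p, t, hmp, -d - c, fun x => by
      linear_combination -hd x - hpar x + H p x * zmod_three_eq_zero⟩
  · exact absurd (fun x => by
      linear_combination -hd x - hpar x + (H p x - H b x) * zmod_three_eq_zero)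
      (hH.not_forall_sub_eq hpt (-c - d))
  · exact ⟨b, p, q, hmp, -d - c, fun x => by
      linear_combination -hd x - hpar x + H p x * zmod_three_eq_zero⟩
  · exact absurd (fun x => by
      linear_combination -hd x - hpar x + (H p x - H b x) * zmod_three_eq_zero)
      (hH.not_forall_sub_eq hpq (-c - d))

theorem IsGH.exists_line_of_parallelogram (hH : IsGH 3 H) (hι : Fintype.card ι = 9)
    {p q s t : ι} {c : ZMod 3} (hps : p ≠ s) (hqt : q ≠ t) (hpq : p ≠ q) (hpt : p ≠ t)
    (hsq : s ≠ q) (hst : s ≠ t) (hpar : ∀ x, H p x + H s x = H q x + H t x + c) :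
    ∃ i j k, i ≠ j ∧ ∃ d, ∀ x, H i x + H j x + H k x = d := by
  classical
  by_contra hline
  have hcard := hH.card_not_isBalanced_le hι hps (s := {p, q, s, t}ᶜ) fun m hm hbal =>
    hline <| hH.exists_line_of_parallelogram_of_isBalanced hps hqt hpq hpt hsq hst hpar
      (by simpa using hm) hbal
  rw [Finset.card_compl, hι] at hcard
  have := Finset.card_le_four (a := p) (b := q) (c := s) (d := t)
  omega

theorem IsGH.exists_line (hH : IsGH 3 H) (hι : Fintype.card ι = 9) :
    ∃ i j k, i ≠ j ∧ ∃ d, ∀ x, H i x + H j x + H k x = d := by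
  classical
  obtain ⟨i, j, hij⟩ := Fintype.one_lt_card_iff.1 (show 1 < Fintype.card ι by omega)
  let bal : ι → Prop := fun m => IsBalanced 3 fun x => H i x + H j x + H m x
  let s : Finset ι := {i, j}ᶜ
  have hs : #s = 7 := by rw [Finset.card_compl, hι, Finset.card_pair hij]
  have hunbal : #{m ∈ s | ¬ bal m} ≤ 3 :=
    hH.card_not_isBalanced_le hι hij fun m hm => (Finset.mem_filter.1 hm).2
  have hbal : 2 < #{m ∈ s | bal m} := by
    have := Finset.card_filter_add_card_filter_not (s := s) fun m => bal m
    omega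
  obtain ⟨a, ha, b, hb, hab, c, hc⟩ := hH.exists_sub_eq_sub_add hij hbal fun m hm => by
    simpa [s, bal, and_assoc] using hm
  simp only [s, Finset.mem_filter, Finset.mem_compl, Finset.mem_insert, Finset.mem_singleton,
    not_or] at ha hb
  exact hH.exists_line_of_parallelogram hι (p := a) (s := i) (q := b) (t := j) (c := c)
    ha.1.1 hb.1.2 hab ha.1.2 (Ne.symm hb.1.1) hij fun x => by linear_combination hc x

theorem IsGH.exists_sub_not_isBalanced (hH : IsGH 3 H) (hι : Fintype.card ι = 9)
    (u : ι → ZMod 3) : ∃ m, ¬ IsBalanced 3 fun x => u x - H m x := by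
  by_contra! hbal
  have hsum := hH.sum_collisions_sub u
  rw [Finset.sum_congr rfl fun m _ => (collisions_eq_iff hι).2 (hbal m), Finset.sum_const,
    Finset.card_univ, hι, ZMod.card] at hsum
  norm_num at hsum

theorem IsGH.exists_add_sub_eq_or_isBalanced (hH : IsGH 3 H) {i j k r m : ι} {c : ZMod 3}
    (hij : i ≠ j) (hline : ∀ x, H i x + H j x + H k x = c) (hri : r ≠ i) (hrj : r ≠ j)
    (hrk : r ≠ k) : (∃ d, ∀ x, H r x + (H j x - H i x) = H m x + d) ∨
      IsBalanced 3 fun x => H r x + (H j x - H i x) - H m x := by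
  have hD : IsBalanced 3 fun x => H j x - H i x := hH.isBalanced_sub hij.symm
  by_cases hmr : m = r
  · exact Or.inr (hD.of_affine one_ne_zero (c := 0) fun x => by rw [hmr]; ring)
  have hsum : ∀ l, l ≠ k → IsBalanced 3 fun x => H i x + H j x + H l x := fun l hl =>
    (hH.isBalanced_sub hl).of_affine one_ne_zero (c := c) fun x => by
      linear_combination hline x
  by_cases hmi : m = i
  · refine Or.inr ((hsum r hrk).of_affine one_ne_zero (c := 0) fun x => ?_)
    rw [hmi]
    linear_combination -H i x * zmod_three_eq_zero
  by_cases hmj : m = j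
  · exact Or.inr ((hH.isBalanced_sub hri).of_affine one_ne_zero (c := 0) fun x => by
      rw [hmj]; ring)
  by_cases hmk : m = k
  · refine Or.inr ((hH.isBalanced_sub hrj).of_affine one_ne_zero (c := -c) fun x => ?_)
    rw [hmk]
    linear_combination -hline x + H j x * zmod_three_eq_zero
  have hfg := hH.bijective_prodMk hij hri hrj (hsum r hrk)
  have hfc := hH.bijective_prodMk hij hmi hmj (hsum m hmk)
  have hgc : IsBalanced 3 fun x => (H r x - H i x) - (H m x - H i x) :=
    (hH.isBalanced_sub (Ne.symm hmr)).of_affine one_ne_zero (c := 0) fun x => by ring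
  refine (exists_add_eq_or_isBalanced_add_sub hD hfg hfc hgc).imp ?_ fun h => ?_
  · rintro ⟨d, hd⟩
    exact ⟨d, fun x => by linear_combination hd x⟩
  · exact h.of_affine one_ne_zero (c := 0) fun x => by ring

theorem IsGH.exists_translation (hH : IsGH 3 H) (hι : Fintype.card ι = 9) :
    ∃ i j, i ≠ j ∧ ∀ r, ∃ m d, ∀ x, (H j x - H i x) + H r x = H m x + d := by
  obtain ⟨i, j, k, hij, c, hline⟩ := hH.exists_line hι
  refine ⟨i, j, hij, fun r => ?_⟩
  by_cases hri : r = i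
  · exact ⟨j, 0, fun x => by rw [hri]; ring⟩
  by_cases hrj : r = j
  · refine ⟨k, -c, fun x => ?_⟩
    rw [hrj]
    linear_combination -hline x + H j x * zmod_three_eq_zero
  by_cases hrk : r = k
  · refine ⟨i, c, fun x => ?_⟩
    rw [hrk]
    linear_combination hline x - H i x * zmod_three_eq_zero
  obtain ⟨m, hm⟩ := hH.exists_sub_not_isBalanced hι fun x => H r x + (H j x - H i x)
  obtain ⟨d, hd⟩ := (hH.exists_add_sub_eq_or_isBalanced hij hline hri hrj hrk).resolve_right hm
  exact ⟨m, d, fun x => by linear_combination hd x⟩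

theorem IsGH.map {F K : Type*} [AddGroup F] [Fintype F] [DecidableEq F] [AddGroup K] [Fintype K]
    [DecidableEq K] {lam : ℕ} {H : Matrix ι ι F} (hH : IsGH lam H) (φ : F ≃+ K) :
    IsGH lam (H.map φ) := fun i j hij a => by
  rw [← hH i j hij (φ.symm a)]
  simp only [Matrix.map_apply, ← map_sub, ← AddEquiv.eq_symm_apply]

theorem IsGH.two_le_kerDim_of_card_eq_nine {F : Type*} [Field F] [Fintype F] [DecidableEq F]
    {H : Matrix ι ι F} (hH : IsGH 3 H) (hF : Fintype.card F = 3) (hι : Fintype.card ι = 9) :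
    2 ≤ kerDim (ghCode H) := by
  let φ : ZMod 3 ≃+* F := ZMod.ringEquivOfPrime F Nat.prime_three hF
  obtain ⟨i, j, hij, htrans⟩ := (hH.map φ.symm.toAddEquiv).exists_translation hι
  have hker : H j - H i ∈ kerSet (ghCode H) := by
    refine mem_kerSet_of_forall_add_mem (hF ▸ Nat.prime_three) ?_
    rintro _ ⟨α, r, rfl⟩
    obtain ⟨m, d, hmd⟩ := htrans r
    refine ⟨φ d + α, m, funext fun x => ?_⟩
    have hx : H j x - H i x + H r x = H m x + φ d := by simpa using congrArg φ (hmd x)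
    rw [Pi.add_apply, Pi.sub_apply, ← add_assoc, hx, add_assoc]
  have hbal := hH.isBalanced_sub hij.symm
  obtain ⟨x, hx⟩ := hbal.exists_eq three_ne_zero 0
  obtain ⟨y, hy⟩ := hbal.exists_eq three_ne_zero 1
  exact two_le_kerDim_ghCode hker (x := x) (y := y)
    (by rw [Pi.sub_apply, Pi.sub_apply, hx, hy]; exact zero_ne_one)

end OrderNine

section Reindex

variable {F ι κ : Type*} [Fintype F] [DecidableEq F] [Fintype ι] [Fintype κ] {lam : ℕ}

theorem IsGH.submatrix [Sub F] {H : Matrix ι ι F} (hH : IsGH lam H) (e : κ ≃ ι) :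
    IsGH lam (H.submatrix e e) := fun _ _ hij =>
  (hH.isBalanced_sub (e.injective.ne hij)).comp_equiv e

theorem IsGH.exists_normalized [Field F] {n : ℕ} {H : Matrix ι ι F} (hH : IsGH lam H)
    (hn : Fintype.card ι = n) (z : ι) (hrow : ∀ s, H z s = 0) (hcol : ∀ i, H i z = 0) :
    ∃ H' : Matrix (Fin n) (Fin n) F,
      IsGH lam H' ∧ Normalized H' ∧ kerDim (ghCode H') = kerDim (ghCode H) := by
  classical
  have : NeZero n := ⟨hn ▸ (Fintype.card_pos_iff.2 ⟨z⟩).ne'⟩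
  let e₀ := (Fintype.equivFinOfCardEq hn).symm
  let e : Fin n ≃ ι := (Equiv.swap 0 (e₀.symm z)).trans e₀
  have he : ∀ i : Fin n, i.val = 0 → e i = z := fun i hi => by
    rw [Fin.val_eq_zero_iff.1 hi]
    simp [e]
  refine ⟨H.submatrix e e, hH.submatrix e, ?_, kerDim_ghCode_submatrix e H⟩
  rintro i s (hi | hs)
  · rw [Matrix.submatrix_apply, he i hi, hrow]
  · rw [Matrix.submatrix_apply, he s hs, hcol]

end Reindex

section Construction

open Matrix

variable {F : Type*} [Field F]

section AffineForms

variable {T n : Type*} [Fintype n]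

/-- The functions `t ↦ j ⬝ᵥ σ t + α`, that is, the affine forms in `σ t`. For `σ = π i` they are,
up to translation by `v i`, what the codewords of `twistedMatrix π v` from the rows `(i, _)` add to
`i ⬝ᵥ s`. -/
def affineForms (σ : T → n → F) : Submodule F (T → F) :=
  LinearMap.range <| LinearMap.pi fun t =>
    ((dotProductBilin F F).flip (σ t)).coprod (LinearMap.id : F →ₗ[F] F)

theorem mem_affineForms {σ : T → n → F} {w : T → F} :
    w ∈ affineForms σ ↔ ∃ j α, ∀ t, w t = j ⬝ᵥ σ t + α := by
  constructor
  · rintro ⟨⟨j, α⟩, rfl⟩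
    exact ⟨j, α, fun t => rfl⟩
  · rintro ⟨j, α, h⟩
    exact ⟨⟨j, α⟩, funext fun t => (h t).symm⟩

theorem one_mem_affineForms (σ : T → n → F) : 1 ∈ affineForms σ :=
  mem_affineForms.2 ⟨0, 1, fun t => by simp⟩

theorem finrank_affineForms_id :
    Module.finrank F (affineForms (id : (n → F) → n → F)) = Fintype.card n + 1 := by
  rw [affineForms, LinearMap.finrank_range_of_inj]
  · simp
  · rintro ⟨j, α⟩ ⟨j', α'⟩ h
    replace h : ∀ t, j ⬝ᵥ t + α = j' ⬝ᵥ t + α' := fun t => congrFun h t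
    obtain rfl : α = α' := by simpa using h 0
    rw [dotProduct_eq j j' fun t => add_right_cancel (h t)]

theorem sq_notMem_affineForms_id (k : n) {z : F} (hz0 : z ≠ 0) (hz1 : z ≠ 1) :
    (fun t => t k ^ 2) ∉ affineForms (id : (n → F) → n → F) := by
  classical
  rw [mem_affineForms]
  rintro ⟨j, c, hj⟩
  have h0 : 0 = c := by simpa using hj 0
  have h1 : 1 = j k + c := by simpa using hj (Pi.single k 1)
  have h2 : z ^ 2 = j k * z + c := by simpa using hj (Pi.single k z)
  have h3 : z * (z - 1) = 0 := by linear_combination h2 - z * h1 + (z - 1) * h0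
  exact mul_ne_zero hz0 (sub_ne_zero.2 hz1) h3

/-- On the fixed points the two linear parts agree; on the displacements `σ t - t` their common
value vanishes. -/
theorem affineForms_inf_id_eq_span_one {σ : (n → F) → n → F} (hσ0 : σ 0 = 0)
    (hfix : ∀ d, (∀ t, σ t = t → d ⬝ᵥ t = 0) → d = 0)
    (hdisp : ∀ d, (∀ t, d ⬝ᵥ (σ t - t) = 0) → d = 0) :
    affineForms σ ⊓ affineForms id = Submodule.span F {1} := by
  refine le_antisymm ?_ ?_
  · rintro w ⟨hw, hw'⟩
    obtain ⟨j, α, hj⟩ := mem_affineForms.1 hw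
    obtain ⟨l, β, hl⟩ := mem_affineForms.1 hw'
    have h : ∀ t, j ⬝ᵥ σ t + α = l ⬝ᵥ t + β := fun t => (hj t).symm.trans (hl t)
    have hαβ : α = β := by simpa [hσ0] using h 0
    have hjl : j = l := sub_eq_zero.1 <| hfix _ fun t ht => by
      have := h t
      rw [ht] at this
      rw [sub_dotProduct]
      linear_combination this - hαβ
    have hl0 : l = 0 := hdisp l fun t => by
      have := h t
      rw [hjl] at this
      rw [dotProduct_sub]
      linear_combination this - hαβ
    refine Submodule.mem_span_singleton.2 ⟨β, funext fun t => ?_⟩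
    simp [hl, hl0]
  · rw [Submodule.span_singleton_le_iff_mem]
    exact ⟨one_mem_affineForms _, one_mem_affineForms _⟩

theorem not_affineForms_le [Nonempty n] {σ : Equiv.Perm (n → F)}
    (hσ : affineForms σ ⊓ affineForms id = Submodule.span F {1}) :
    ¬ affineForms σ ≤ affineForms id := by
  classical
  intro hle
  obtain ⟨k⟩ := ‹Nonempty n›
  have hk : (fun t => σ t k) ∈ affineForms σ :=
    mem_affineForms.2 ⟨Pi.single k 1, 0, fun t => by simp⟩
  rw [inf_eq_left.2 hle] at hσ
  rw [hσ, Submodule.mem_span_singleton] at hk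
  obtain ⟨a, ha⟩ := hk
  have h0 : a = 0 := by simpa using congrFun ha (σ.symm 0)
  have h1 : a = 1 := by simpa using congrFun ha (σ.symm 1)
  exact zero_ne_one (h0.symm.trans h1)

end AffineForms

variable {m n : Type*} [Fintype m]

/-- The words `(s, t) ↦ i ⬝ᵥ s + u t`, linear in `(i, u)`; all codewords of twisted matrices have
this shape. -/
def splitWord : (m → F) × ((n → F) → F) →ₗ[F] ((m → F) × (n → F) → F) :=
  LinearMap.pi fun r => ((dotProductBilin F F).flip r.1).coprod (LinearMap.proj r.2)

theorem splitWord_apply (i : m → F) (u : (n → F) → F) (s : m → F) (t : n → F) :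
    splitWord (i, u) (s, t) = i ⬝ᵥ s + u t :=
  rfl

theorem splitWord_injective :
    Function.Injective (splitWord : (m → F) × ((n → F) → F) →ₗ[F] _) := by
  rw [← LinearMap.ker_eq_bot, LinearMap.ker_eq_bot']
  rintro ⟨i, u⟩ h
  replace h : ∀ s t, i ⬝ᵥ s + u t = 0 := fun s t => congrFun h (s, t)
  have hu : u = 0 := funext fun t => by simpa using h 0 t
  have hi : i = 0 := dotProduct_eq_zero i fun s => by simpa [hu] using h s 0
  rw [hi, hu, Prod.mk_zero_zero]

variable [Fintype n]

/-- The matrix whose rows, indexed by pairs `(i, j)`, are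
`(s, t) ↦ i ⬝ᵥ s + j ⬝ᵥ π i t + v i t`: the Sylvester matrix, except that, depending on `i`, the
positions `t` are permuted and the entries are translated. -/
def twistedMatrix (π : (m → F) → Equiv.Perm (n → F)) (v : (m → F) → (n → F) → F) :
    Matrix ((m → F) × (n → F)) ((m → F) × (n → F)) F :=
  fun p r => p.1 ⬝ᵥ r.1 + p.2 ⬝ᵥ π p.1 r.2 + v p.1 r.2

section Hadamard

variable [Fintype F] [DecidableEq F]

theorem isBalanced_dotProduct [DecidableEq n] {d : n → F} (hd : d ≠ 0) :
    IsBalanced (Fintype.card F ^ (Fintype.card n - 1)) fun t => d ⬝ᵥ t := by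
  obtain ⟨k, hk⟩ := Function.ne_iff.1 hd
  refine isBalanced_of_surjective (f := (dotProductBilin F F d).toAddMonoidHom) (fun x => ?_) ?_
  · refine ⟨Pi.single k ((d k)⁻¹ * x), ?_⟩
    change d ⬝ᵥ _ = x
    rw [dotProduct_single, mul_inv_cancel_left₀ hk]
  · rw [Fintype.card_fun, mul_pow_sub_one (Fintype.card_pos_iff.2 ⟨k⟩).ne']

theorem isGH_twistedMatrix [DecidableEq m] [DecidableEq n] [Nonempty n]
    (π : (m → F) → Equiv.Perm (n → F)) (v : (m → F) → (n → F) → F) :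
    IsGH (Fintype.card F ^ (Fintype.card m + Fintype.card n - 1)) (twistedMatrix π v) := by
  rintro ⟨i, j⟩ ⟨i', j'⟩ hne
  have hn : Fintype.card n ≠ 0 := Fintype.card_ne_zero
  by_cases hi : i = i'
  · subst hi
    have hj : j - j' ≠ 0 := sub_ne_zero.2 fun h => hne (by rw [h])
    have h := IsBalanced.of_snd (ι := m → F)
      (u := fun r => twistedMatrix π v (i, j) r - twistedMatrix π v (i, j') r) fun s =>
        ((isBalanced_dotProduct hj).comp_equiv (π i)).of_affine one_ne_zero (c := 0) fun t => by
          simp only [twistedMatrix, sub_dotProduct]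
          ring
    rwa [Fintype.card_fun, ← pow_add, ← Nat.add_sub_assoc (Nat.one_le_iff_ne_zero.2 hn)] at h
  · have hm : Fintype.card m ≠ 0 := fun h =>
      have := Fintype.card_eq_zero_iff.1 h
      hi (Subsingleton.elim i i')
    have h := IsBalanced.of_fst (ι := n → F)
      (u := fun r => twistedMatrix π v (i, j) r - twistedMatrix π v (i', j') r) fun t =>
        (isBalanced_dotProduct (sub_ne_zero.2 hi)).of_affine one_ne_zero
          (c := j ⬝ᵥ π i t + v i t - (j' ⬝ᵥ π i' t + v i' t)) fun s => by
            simp only [twistedMatrix, sub_dotProduct]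
            ring
    rwa [Fintype.card_fun, ← pow_add, ← Nat.add_sub_assoc (Nat.one_le_iff_ne_zero.2 hm),
      Nat.add_comm (Fintype.card n)] at h

theorem exists_normalized_twistedMatrix [Nonempty n] {h : ℕ}
    (hmn : Fintype.card m + Fintype.card n = h) {π : (m → F) → Equiv.Perm (n → F)}
    (hπ : ∀ i, π i 0 = 0) {v : (m → F) → (n → F) → F} (hv : v 0 = 0) (hv' : ∀ i, v i 0 = 0) :
    ∃ H : Matrix (Fin (Fintype.card F ^ h)) (Fin (Fintype.card F ^ h)) F,
      IsGH (Fintype.card F ^ (h - 1)) H ∧ Normalized H ∧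
        kerDim (ghCode H) = kerDim (ghCode (twistedMatrix π v)) := by
  classical
  subst hmn
  refine (isGH_twistedMatrix π v).exists_normalized ?_ 0 (fun s => ?_) fun i => ?_
  · simp [pow_add]
  · simp [twistedMatrix, hv]
  · simp [twistedMatrix, hπ, hv']

end Hadamard

variable {π : (m → F) → Equiv.Perm (n → F)} {v : (m → F) → (n → F) → F}

theorem ghCode_twistedMatrix :
    ghCode (twistedMatrix π v) = splitWord '' {p | p.2 - v p.1 ∈ affineForms (π p.1)} := by
  ext x
  constructor
  · rintro ⟨α, ⟨i, j⟩, rfl⟩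
    refine ⟨(i, fun t => j ⬝ᵥ π i t + v i t + α), mem_affineForms.2 ⟨j, α, fun t => ?_⟩, ?_⟩
    · rw [Pi.sub_apply]
      ring
    · funext ⟨s, t⟩
      rw [splitWord_apply, twistedMatrix]
      ring
  · rintro ⟨⟨i, u⟩, hu, rfl⟩
    obtain ⟨j, α, h⟩ := mem_affineForms.1 hu
    refine ⟨α, (i, j), funext fun ⟨s, t⟩ => ?_⟩
    rw [splitWord_apply, twistedMatrix]
    replace h : ∀ t, u t - v i t = j ⬝ᵥ π i t + α := h
    linear_combination h t

theorem splitWord_mem_kerSet_iff {i : m → F} {u : (n → F) → F} :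
    splitWord (i, u) ∈ kerSet (ghCode (twistedMatrix π v)) ↔
      ∀ (α : F) (j : m → F) (w : (n → F) → F), w - v j ∈ affineForms (π j) →
        α • u + w - v (α • i + j) ∈ affineForms (π (α • i + j)) := by
  simp only [mem_kerSet_iff, ghCode_twistedMatrix, Set.forall_mem_image, ← map_smul, ← map_add,
    splitWord_injective.mem_set_image, Prod.forall, Set.mem_ofPred_eq, Prod.smul_mk, Prod.mk_add_mk]

theorem kerSubmodule_twistedMatrix (hv : v 0 = 0)
    (hzero : ∀ i u, splitWord (i, u) ∈ kerSet (ghCode (twistedMatrix π v)) → i = 0) :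
    kerSubmodule (ghCode (twistedMatrix π v)) =
      (⨅ i, affineForms (π i)).map (splitWord ∘ₗ LinearMap.inr F (m → F) ((n → F) → F)) := by
  have hmem : ∀ u, splitWord (0, u) ∈ kerSet (ghCode (twistedMatrix π v)) ↔
      ∀ i, u ∈ affineForms (π i) := by
    intro u
    rw [splitWord_mem_kerSet_iff]
    refine ⟨fun h i => by simpa using h 1 i (v i) (by simp), fun h α j w hw => ?_⟩
    rw [smul_zero, zero_add, add_sub_assoc]
    exact add_mem (Submodule.smul_mem _ _ (h j)) hw
  have h0 : 0 ∈ ghCode (twistedMatrix π v) := by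
    rw [ghCode_twistedMatrix]
    exact ⟨0, by simp [hv], map_zero _⟩
  ext x
  constructor
  · intro hx
    have hx' := kerSet_subset_of_zero_mem h0 hx
    rw [ghCode_twistedMatrix] at hx'
    obtain ⟨⟨i, u⟩, -, rfl⟩ := hx'
    obtain rfl := hzero i u hx
    exact ⟨u, (Submodule.mem_iInf _).2 ((hmem u).1 hx), rfl⟩
  · rintro ⟨u, hu, rfl⟩
    exact (hmem u).2 ((Submodule.mem_iInf _).1 hu)

theorem kerDim_twistedMatrix (hv : v 0 = 0)
    (hzero : ∀ i u, splitWord (i, u) ∈ kerSet (ghCode (twistedMatrix π v)) → i = 0) :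
    kerDim (ghCode (twistedMatrix π v)) = Module.finrank F ↥(⨅ i, affineForms (π i)) := by
  rw [kerDim_eq_finrank, kerSubmodule_twistedMatrix hv hzero]
  exact (Submodule.equivMapOfInjective (splitWord ∘ₗ LinearMap.inr F (m → F) ((n → F) → F))
    (splitWord_injective.comp LinearMap.inr_injective) _).finrank_eq.symm

variable [DecidableEq (m → F)]

theorem kerDim_twistedMatrix_ite {g : (n → F) → F} (hg : g ∉ affineForms id) {z : F}
    (hz0 : z ≠ 0) (hz1 : z ≠ 1) :
    kerDim (ghCode (twistedMatrix (m := m) (fun _ => 1) fun i => if i = 0 then 0 else g)) =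
      Fintype.card n + 1 := by
  rw [kerDim_twistedMatrix (by exact if_pos rfl), ← finrank_affineForms_id (F := F)]
  · rw [iInf_const, Equiv.Perm.coe_one]
  · intro i u hiu
    by_contra hi
    rw [splitWord_mem_kerSet_iff] at hiu
    have h1 : u - g ∈ affineForms id := by
      simpa [hi] using hiu 1 0 0 (by simp)
    have hz : z • u - g ∈ affineForms id := by
      simpa [hi, hz0] using hiu z 0 0 (by simp)
    have hzg : (z - 1) • g ∈ affineForms id := by
      convert sub_mem hz (Submodule.smul_mem _ z h1) using 1
      module
    exact hg ((Submodule.smul_mem_iff _ (sub_ne_zero.2 hz1)).1 hzg)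

theorem kerDim_twistedMatrix_ite_perm [Nonempty n] {e : m → F} (he : e ≠ 0)
    {σ : Equiv.Perm (n → F)} (hσ : affineForms σ ⊓ affineForms id = Submodule.span F {1}) :
    kerDim (ghCode (twistedMatrix (fun i => if i = e then σ else 1) 0)) = 1 := by
  rw [kerDim_twistedMatrix rfl]
  · have hinf : ⨅ i, affineForms (if i = e then σ else 1 : Equiv.Perm (n → F)) =
        affineForms σ ⊓ affineForms id := by
      refine le_antisymm (le_inf ?_ ?_) (le_iInf fun i => ?_)
      · exact (iInf_le _ e).trans_eq (by rw [if_pos rfl])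
      · exact (iInf_le _ 0).trans_eq (by rw [if_neg he.symm, Equiv.Perm.coe_one])
      · split_ifs
        exacts [inf_le_left, inf_le_right]
    rw [hinf, hσ, finrank_span_singleton one_ne_zero]
  · intro i u hiu
    by_contra hi
    rw [splitWord_mem_kerSet_iff] at hiu
    refine not_affineForms_le hσ fun w hw => ?_
    have hw' := hiu 1 e w (by simpa using hw)
    have h0 := hiu 1 e 0 (by simp)
    simpa [hi] using sub_mem hw' h0

section Existence

variable [Fintype F]

theorem exists_ne_zero_ne_one_ne (hF : 3 < Fintype.card F) (y : F) :
    ∃ z : F, z ≠ 0 ∧ z ≠ 1 ∧ z ≠ y := by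
  classical
  have h : #{0, 1, y} < #univ := Finset.card_le_three.trans_lt hF
  obtain ⟨z, -, hz⟩ := Finset.exists_mem_notMem_of_card_lt_card h
  exact ⟨z, by simpa using hz⟩

theorem exists_ne_zero_ne_one (hF : 2 < Fintype.card F) : ∃ z : F, z ≠ 0 ∧ z ≠ 1 := by
  classical
  have h : #({0, 1} : Finset F) < #univ := Finset.card_le_two.trans_lt hF
  obtain ⟨z, -, hz⟩ := Finset.exists_mem_notMem_of_card_lt_card h
  exact ⟨z, by simpa using hz⟩

theorem exists_perm_fin_one_affineForms_inf_id_eq (hF : 3 < Fintype.card F) :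
    ∃ σ : Equiv.Perm (Fin 1 → F), σ 0 = 0 ∧
      affineForms σ ⊓ affineForms id = Submodule.span F {1} := by
  classical
  obtain ⟨y, hy0, hy1⟩ := exists_ne_zero_ne_one (by omega : 2 < Fintype.card F)
  obtain ⟨z, hz0, hz1, hzy⟩ := exists_ne_zero_ne_one_ne hF y
  let σ : Equiv.Perm (Fin 1 → F) := Equiv.swap ![1] ![y]
  have hσ0 : σ 0 = 0 :=
    Equiv.swap_apply_of_ne_of_ne (by simp [funext_iff]) (by simp [funext_iff, hy0.symm])
  have hσz : σ ![z] = ![z] := Equiv.swap_apply_of_ne_of_ne (by simp [hz1]) (by simp [hzy])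
  refine ⟨σ, hσ0, affineForms_inf_id_eq_span_one hσ0 (fun d hd => ?_) fun d hd => ?_⟩
  · have hdz : d 0 = 0 := by simpa [dotProduct, hz0] using hd ![z] hσz
    simpa [funext_iff] using hdz
  · have hd1 : d 0 = 0 := by
      simpa [dotProduct, σ, sub_eq_zero, hy1] using hd ![1]
    simpa [funext_iff] using hd1

theorem exists_perm_fin_two_affineForms_inf_id_eq (hF : 2 < Fintype.card F) :
    ∃ σ : Equiv.Perm (Fin 2 → F), σ 0 = 0 ∧
      affineForms σ ⊓ affineForms id = Submodule.span F {1} := by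
  classical
  obtain ⟨z, hz0, hz1⟩ := exists_ne_zero_ne_one hF
  let σ : Equiv.Perm (Fin 2 → F) := Equiv.swap ![1, 0] ![1, 1] * Equiv.swap ![1, 0] ![0, 1]
  have hσ0 : σ 0 = 0 := by simp [σ, Equiv.swap_apply_def, funext_iff]
  have hσz : σ ![z, 0] = ![z, 0] := by simp [σ, Equiv.swap_apply_def, funext_iff, hz0, hz1]
  have hσz' : σ ![0, z] = ![0, z] := by simp [σ, Equiv.swap_apply_def, funext_iff, hz0, hz1]
  have hσ1 : σ ![0, 1] = ![1, 1] := by simp [σ]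
  have hσ2 : σ ![1, 1] = ![1, 0] := by simp [σ, Equiv.swap_apply_def, funext_iff]
  refine ⟨σ, hσ0, affineForms_inf_id_eq_span_one hσ0 (fun d hd => ?_) fun d hd => ?_⟩
  · have hd0 : d 0 = 0 := by simpa [dotProduct, hz0] using hd ![z, 0] hσz
    have hd1 : d 1 = 0 := by simpa [dotProduct, hz0] using hd ![0, z] hσz'
    simp [funext_iff, hd0, hd1]
  · have hd0 : d 0 = 0 := by simpa [dotProduct, hσ1] using hd ![0, 1]
    have hd1 : d 1 = 0 := by simpa [dotProduct, hσ2] using hd ![1, 1]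
    simp [funext_iff, hd0, hd1]

variable [DecidableEq F]

theorem exists_kerDim_eq_of_two_le (hF : 2 < Fintype.card F) {h k : ℕ} (hk : 2 ≤ k)
    (hkh : k ≤ h + 1) :
    ∃ H : Matrix (Fin (Fintype.card F ^ h)) (Fin (Fintype.card F ^ h)) F,
      IsGH (Fintype.card F ^ (h - 1)) H ∧ Normalized H ∧ kerDim (ghCode H) = k := by
  obtain ⟨z, hz0, hz1⟩ := exists_ne_zero_ne_one hF
  have : NeZero (k - 1) := ⟨by omega⟩
  have hg := sq_notMem_affineForms_id (0 : Fin (k - 1)) hz0 hz1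
  obtain ⟨H, hH, hnorm, hker⟩ := exists_normalized_twistedMatrix (h := h)
    (n := Fin (k - 1)) (by rw [Fintype.card_fin, Fintype.card_fin]; omega)
    (π := fun _ => 1) (fun _ => rfl)
    (v := fun i : Fin (h + 1 - k) → F => if i = 0 then 0 else fun t => t 0 ^ 2)
    (by exact if_pos rfl) fun i => by split_ifs <;> simp
  refine ⟨H, hH, hnorm, ?_⟩
  rw [hker, kerDim_twistedMatrix_ite hg hz0 hz1, Fintype.card_fin]
  omega

theorem exists_kerDim_eq_one_of_perm {m n : ℕ} [NeZero m] [NeZero n] {σ : Equiv.Perm (Fin n → F)}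
    (hσ0 : σ 0 = 0) (hσ : affineForms σ ⊓ affineForms id = Submodule.span F {1}) :
    ∃ H : Matrix (Fin (Fintype.card F ^ (m + n))) (Fin (Fintype.card F ^ (m + n))) F,
      IsGH (Fintype.card F ^ (m + n - 1)) H ∧ Normalized H ∧ kerDim (ghCode H) = 1 := by
  obtain ⟨H, hH, hnorm, hker⟩ := exists_normalized_twistedMatrix (h := m + n)
    (m := Fin m) (n := Fin n) (by simp) (π := fun i => if i = 1 then σ else 1)
    (fun i => by split_ifs <;> simp [hσ0]) (v := 0) rfl fun i => rfl
  exact ⟨H, hH, hnorm, hker.trans (kerDim_twistedMatrix_ite_perm one_ne_zero hσ)⟩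

theorem exists_kerDim_eq_one (hF : 2 < Fintype.card F) {h : ℕ} (hh : 2 ≤ h)
    (hne : ¬(Fintype.card F = 3 ∧ h = 2)) :
    ∃ H : Matrix (Fin (Fintype.card F ^ h)) (Fin (Fintype.card F ^ h)) F,
      IsGH (Fintype.card F ^ (h - 1)) H ∧ Normalized H ∧ kerDim (ghCode H) = 1 := by
  by_cases hF3 : Fintype.card F = 3
  · obtain ⟨m, rfl⟩ : ∃ m, h = m + 1 + 2 := ⟨h - 3, by omega⟩
    obtain ⟨σ, hσ0, hσ⟩ := exists_perm_fin_two_affineForms_inf_id_eq hF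
    exact exists_kerDim_eq_one_of_perm hσ0 hσ
  · obtain ⟨m, rfl⟩ : ∃ m, h = m + 1 + 1 := ⟨h - 2, by omega⟩
    obtain ⟨σ, hσ0, hσ⟩ := exists_perm_fin_one_affineForms_inf_id_eq (by omega : 3 < Fintype.card F)
    exact exists_kerDim_eq_one_of_perm hσ0 hσ

end Existence

end Construction

theorem stmt9 {q h k : ℕ} {F : Type*} [Field F] [Fintype F] [DecidableEq F]
    (hcard : Fintype.card F = q) (hq : 2 < q) (hh : 2 ≤ h) :
    (¬ (q = 3 ∧ h = 2) →
      ((∃ H : Matrix (Fin (q ^ h)) (Fin (q ^ h)) F,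
          IsGH (q ^ (h - 1)) H ∧ Normalized H ∧ kerDim (ghCode H) = k) ↔
        1 ≤ k ∧ k ≤ h + 1)) ∧
    ((q = 3 ∧ h = 2) →
      ((∃ H : Matrix (Fin (q ^ h)) (Fin (q ^ h)) F,
          IsGH (q ^ (h - 1)) H ∧ Normalized H ∧ kerDim (ghCode H) = k) ↔
        (k = 2 ∨ k = 3))) := by
  subst hcard
  refine ⟨fun hne => ⟨?_, ?_⟩, ?_⟩
  · rintro ⟨H, -, hnorm, rfl⟩
    exact hnorm.kerDim_ghCode_mem_Icc
  · rintro ⟨hk1, hkh⟩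
    obtain rfl | hk2 := hk1.eq_or_lt
    · exact exists_kerDim_eq_one hq hh hne
    · exact exists_kerDim_eq_of_two_le hq hk2 hkh
  · rintro ⟨hF, rfl⟩
    constructor
    · rintro ⟨H, hH, hnorm, rfl⟩
      have hle := hnorm.kerDim_ghCode_mem_Icc.2
      have hge : 2 ≤ kerDim (ghCode H) :=
        IsGH.two_le_kerDim_of_card_eq_nine (by simpa [hF] using hH) hF (by simp [hF])
      omega
    · rintro (rfl | rfl) <;> exact exists_kerDim_eq_of_two_le hq (by norm_num) (by norm_num)
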